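/- Let A and B be positive definite n×n complex matrices and s ∈ [0,1]. Then Tr A − Tr(B^s A^{1−s}) ≤ Tr((A−B)_+), where (A−B)_+ denotes the positive part of the self-adjoint matrix A−B. -/

import Mathlib

open scoped ComplexOrder

/-- Functional calculus for Hermitian matrices (junk value `0` off the Hermitian matrices). -/
noncomputable def cfcM {d : ℕ} (f : ℝ → ℝ) (A : Matrix (Fin d) (Fin d) ℂ) :
    Matrix (Fin d) (Fin d) ℂ :=
  if h : A.IsHermitian then
    (h.eigenvectorUnitary : Matrix (Fin d) (Fin d) ℂ) *
      Matrix.diagonal (fun i => (f (h.eigenvalues i) : ℂ)) *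
      (star (h.eigenvectorUnitary : Matrix (Fin d) (Fin d) ℂ))
  else 0

/-- Real power of a (positive) Hermitian matrix via functional calculus. -/
noncomputable def mpow {d : ℕ} (A : Matrix (Fin d) (Fin d) ℂ) (s : ℝ) :
    Matrix (Fin d) (Fin d) ℂ := cfcM (fun x => x ^ s) A

/-- Positive part of a Hermitian matrix via functional calculus. -/
noncomputable def posPartM {d : ℕ} (A : Matrix (Fin d) (Fin d) ℂ) :
    Matrix (Fin d) (Fin d) ℂ := cfcM (fun x => max x 0) A

/-!
For any `c` dominating both `a` and `b`, operator monotonicity of `x ↦ x ^ s` and `x ↦ x ^ (1 - s)`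
gives, under a trace,
`τ ((a ^ s - b ^ s) * a ^ (1 - s)) ≤ τ ((c ^ s - b ^ s) * c ^ (1 - s)) ≤ τ (c - b)`.
The choice `c = b + (a - b)⁺` makes the right-hand side `τ (a - b)⁺`.
-/

/-- Traciality, the property of a trace that lets factors be exchanged inside it. It is stated for
bare functions: positivity and linearity come from applying it to a positive linear map. -/
def IsTracial {M N : Type*} [Mul M] (τ : M → N) : Prop :=
  ∀ x y, τ (x * y) = τ (y * x)

section StarOrderedRing

variable {R 𝓐 E : Type*} [Semiring R] [NonUnitalRing 𝓐] [StarRing 𝓐] [PartialOrder 𝓐]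
  [StarOrderedRing 𝓐] [Module R 𝓐] [AddCommGroup E] [PartialOrder E] [IsOrderedAddMonoid E]
  [Module R E] {τ : 𝓐 →ₚ[R] E} {x y z : 𝓐}

lemma IsTracial.map_mul_nonneg (hτ : IsTracial τ) (hx : 0 ≤ x) (hy : 0 ≤ y) :
    0 ≤ τ (x * y) := by
  rw [StarOrderedRing.nonneg_iff] at hy
  induction hy using AddSubmonoid.closure_induction with
  | mem _ h =>
    obtain ⟨w, rfl⟩ := h
    calc
      0 ≤ τ (w * x * star w) := map_nonneg τ (star_right_conjugate_nonneg hx w)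
      _ = τ (x * (star w * w)) := by rw [mul_assoc, hτ, mul_assoc]
  | zero => rw [mul_zero, map_zero]
  | add u v _ _ hu hv =>
    rw [mul_add, map_add]
    exact add_nonneg hu hv

lemma IsTracial.map_mul_le_map_mul_left (hτ : IsTracial τ) (hyz : y ≤ z) (hx : 0 ≤ x) :
    τ (x * y) ≤ τ (x * z) := by
  rw [← sub_nonneg, ← map_sub, ← mul_sub]
  exact hτ.map_mul_nonneg hx (sub_nonneg.mpr hyz)

lemma IsTracial.map_mul_le_map_mul_right (hτ : IsTracial τ) (hyz : y ≤ z) (hx : 0 ≤ x) :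
    τ (y * x) ≤ τ (z * x) := by
  rw [hτ y, hτ z]
  exact hτ.map_mul_le_map_mul_left hyz hx

end StarOrderedRing

section Rpow

variable {𝓐 : Type*} [PartialOrder 𝓐] [Ring 𝓐] [StarRing 𝓐] [TopologicalSpace 𝓐]
  [StarOrderedRing 𝓐] [Algebra ℝ 𝓐] [ContinuousFunctionalCalculus ℝ 𝓐 IsSelfAdjoint]
  [NonnegSpectrumClass ℝ 𝓐]

lemma cfc_rpow_add_of_nonneg (a : 𝓐) {s t : ℝ} (hs : 0 ≤ s) (ht : 0 ≤ t) :
    a ^ (s + t) = a ^ s * a ^ t := by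
  simp only [CFC.rpow_def, NNReal.rpow_add_of_nonneg _ hs ht]
  exact cfc_mul _ _ a (NNReal.continuous_rpow_const hs).continuousOn
    (NNReal.continuous_rpow_const ht).continuousOn

lemma cfc_rpow_mul_rpow_one_sub {a : 𝓐} (ha : 0 ≤ a) {s : ℝ} (hs : s ∈ Set.Icc (0 : ℝ) 1) :
    a ^ s * a ^ (1 - s) = a := by
  rw [← cfc_rpow_add_of_nonneg a hs.1 (sub_nonneg.mpr hs.2), add_sub_cancel, CFC.rpow_one a ha]

end Rpow

section CStarAlgebra

variable {R 𝓐 E : Type*} [Semiring R] [CStarAlgebra 𝓐] [PartialOrder 𝓐] [StarOrderedRing 𝓐]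
  [Module R 𝓐] [AddCommGroup E] [PartialOrder E] [IsOrderedAddMonoid E] [Module R E]
  {τ : 𝓐 →ₚ[R] E} {a b c : 𝓐} {s : ℝ}

lemma IsTracial.map_sub_map_rpow_mul_rpow_le (hτ : IsTracial τ) (ha : 0 ≤ a) (hb : 0 ≤ b)
    (hac : a ≤ c) (hbc : b ≤ c) (hs : s ∈ Set.Icc (0 : ℝ) 1) :
    τ a - τ (b ^ s * a ^ (1 - s)) ≤ τ (c - b) := by
  have hs' : 1 - s ∈ Set.Icc (0 : ℝ) 1 := Set.Icc.one_sub_mem hs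
  calc
    τ a - τ (b ^ s * a ^ (1 - s)) = τ ((a ^ s - b ^ s) * a ^ (1 - s)) := by
      rw [sub_mul, map_sub, cfc_rpow_mul_rpow_one_sub ha hs]
    _ ≤ τ ((c ^ s - b ^ s) * a ^ (1 - s)) :=
      hτ.map_mul_le_map_mul_right (sub_le_sub_right (CFC.rpow_le_rpow hs hac) _) CFC.rpow_nonneg
    _ ≤ τ ((c ^ s - b ^ s) * c ^ (1 - s)) :=
      hτ.map_mul_le_map_mul_left (CFC.rpow_le_rpow hs' hac)
        (sub_nonneg.mpr (CFC.rpow_le_rpow hs hbc))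
    _ = τ c - τ (b ^ s * c ^ (1 - s)) := by
      rw [sub_mul, map_sub, cfc_rpow_mul_rpow_one_sub (ha.trans hac) hs]
    _ ≤ τ c - τ (b ^ s * b ^ (1 - s)) :=
      sub_le_sub_left (hτ.map_mul_le_map_mul_left (CFC.rpow_le_rpow hs' hbc) CFC.rpow_nonneg) _
    _ = τ (c - b) := by rw [cfc_rpow_mul_rpow_one_sub hb hs, map_sub]

theorem trace_sub_trace_rpow_le_trace_posPart_general (hτ : IsTracial τ) (ha : 0 ≤ a)
    (hb : 0 ≤ b) (hs : s ∈ Set.Icc (0 : ℝ) 1) :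
    τ a - τ (b ^ s * a ^ (1 - s)) ≤ τ (a - b)⁺ := by
  have hac : a ≤ b + (a - b)⁺ := sub_le_iff_le_add'.mp CFC.le_posPart
  have hbc : b ≤ b + (a - b)⁺ := le_add_of_nonneg_right (CFC.posPart_nonneg _)
  simpa only [add_sub_cancel_left] using hτ.map_sub_map_rpow_mul_rpow_le ha hb hac hbc hs

end CStarAlgebra

open scoped MatrixOrder Matrix.Norms.L2Operator

section Matrix

variable {d : ℕ} {A : Matrix (Fin d) (Fin d) ℂ}

lemma cfcM_eq_cfc (f : ℝ → ℝ) (hA : A.IsHermitian) : cfcM f A = cfc f A := by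
  rw [hA.cfc_eq, cfcM, dif_pos hA, Matrix.IsHermitian.cfc, Unitary.conjStarAlgAut_apply]
  rfl

lemma mpow_eq_rpow (hA : A.PosSemidef) (s : ℝ) : mpow A s = A ^ s := by
  rw [mpow, cfcM_eq_cfc _ hA.isHermitian, CFC.rpow_eq_cfc_real hA.nonneg]

lemma posPartM_eq_posPart (hA : A.IsHermitian) : posPartM A = A⁺ := by
  rw [posPartM, cfcM_eq_cfc _ hA, CFC.posPart_def, cfcₙ_eq_cfc]
  rfl

end Matrix

lemma isTracial_tracePositiveLinearMap (n α 𝕜 : Type*) [Fintype n] [RCLike 𝕜] [Semiring α]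
    [Module α 𝕜] : IsTracial (Matrix.tracePositiveLinearMap n α 𝕜) :=
  Matrix.trace_mul_comm

/-- For positive definite `A`, `B` on `ℂ^n` and `s ∈ [0,1]`:
`Tr A − Tr(B^s A^{1−s}) ≤ Tr((A−B)_+)`. -/
theorem trace_sub_trace_rpow_le_trace_posPart {n : ℕ}
    (A B : Matrix (Fin n) (Fin n) ℂ) (hA : A.PosDef) (hB : B.PosDef)
    (s : ℝ) (hs : s ∈ Set.Icc (0 : ℝ) 1) :
    (A.trace).re - ((mpow B s * mpow A (1 - s)).trace).re
      ≤ ((posPartM (A - B)).trace).re := by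
  rw [mpow_eq_rpow hB.posSemidef, mpow_eq_rpow hA.posSemidef,
    posPartM_eq_posPart (hA.isHermitian.sub hB.isHermitian)]
  exact (Complex.le_def.mp (trace_sub_trace_rpow_le_trace_posPart_general
    (isTracial_tracePositiveLinearMap (Fin n) ℂ ℂ)
    hA.posSemidef.nonneg hB.posSemidef.nonneg hs)).1
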